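/- An ETL frame whose accessibility relation is an equivalence relation (S5) has perfect recall with respect to epistemic experience (PR_ee) if and only if it has perfect recall with respect to history consistency (PR_hc). -/

import Mathlib

attribute [local instance] Classical.propDecidable

/-- A protocol is a prefix-closed set of histories. -/
def PrefixClosed {E : Type*} (H : Set (List E)) : Prop :=
  ∀ g h : List E, g <+: h → h ∈ H → g ∈ H

/-- Perfect recall with respect to history consistency. -/
def PRhc {E : Type*} (H : Set (List E)) (sim : List E → List E → Prop) : Prop :=
  ∀ (h h' : List E) (e : E), h ∈ H → h ++ [e] ∈ H → h' ∈ H → sim (h ++ [e]) h' →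
    ∃ h'', h'' ∈ H ∧ sim h h'' ∧ h'' <+: h'

/-- Perfect recall with respect to history consistency, local version. -/
def PRhcl {E : Type*} (H : Set (List E)) (sim : List E → List E → Prop) : Prop :=
  ∀ (h h' : List E) (e : E), h ∈ H → h ++ [e] ∈ H → h' ∈ H → sim (h ++ [e]) h' →
    sim h h' ∨
    (∃ (h'' : List E) (e'' : E), h'' ∈ H ∧ sim h h'' ∧ h' = h'' ++ [e'']) ∨
    (∃ (h'' : List E) (e'' : E), h'' ∈ H ∧ sim (h ++ [e]) h'' ∧ h' = h'' ++ [e''])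

/-- The information set of a history. -/
def infoSet {E : Type*} (H : Set (List E)) (sim : List E → List E → Prop) (h : List E) :
    Set (List E) := {h' | h' ∈ H ∧ sim h h'}

/-- The epistemic experience along a history (information sets over all prefixes, in order),
with consecutive repetitions of identical sets removed (destuttered). -/
noncomputable def EEd {E : Type*} (H : Set (List E)) (sim : List E → List E → Prop)
    (h : List E) : List (Set (List E)) :=
  ((List.range (h.length + 1)).map fun n => infoSet H sim (h.take n)).destutter (· ≠ ·)

/-- Perfect recall with respect to epistemic experience: accessible histories have
equivalent epistemic experiences modulo stutterings. -/
def PRee {E : Type*} (H : Set (List E)) (sim : List E → List E → Prop) : Prop :=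
  ∀ h h' : List E, h ∈ H → h' ∈ H → sim h h' → EEd H sim h = EEd H sim h'

def TransOn {E : Type*} (H : Set (List E)) (sim : List E → List E → Prop) : Prop :=
  ∀ a b c : List E, a ∈ H → b ∈ H → c ∈ H → sim a b → sim b c → sim a c

def EuclOn {E : Type*} (H : Set (List E)) (sim : List E → List E → Prop) : Prop :=
  ∀ a b c : List E, a ∈ H → b ∈ H → c ∈ H → sim a b → sim a c → sim b c

/-- S5: the accessibility relation is an equivalence relation on the protocol. -/
def S5on {E : Type*} (H : Set (List E)) (sim : List E → List E → Prop) : Prop :=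
  (∀ h ∈ H, sim h h) ∧ (∀ h h' : List E, sim h h' → sim h' h) ∧
    (∀ a b c : List E, sim a b → sim b c → sim a c)

/-- Synchronous perfect recall. -/
def sPR {E : Type*} (H : Set (List E)) (sim : List E → List E → Prop) : Prop :=
  ∀ (h h' : List E) (e : E), h ∈ H → h ++ [e] ∈ H → h' ∈ H → sim (h ++ [e]) h' →
    ∃ (h'' : List E) (e' : E), h'' ∈ H ∧ sim h h'' ∧ h' = h'' ++ [e']

/-- Weak synchronous perfect recall. -/
def wsPR {E : Type*} (H : Set (List E)) (sim : List E → List E → Prop) : Prop :=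
  ∀ (h h' : List E) (e e' : E), h ∈ H → h' ∈ H → h ++ [e] ∈ H → h' ++ [e'] ∈ H →
    sim (h ++ [e]) (h' ++ [e']) → sim h h'

/-- The reflexive-symmetric closure (= S5 closure on introspective frames). -/
def S5cl {E : Type*} (sim : List E → List E → Prop) (h h' : List E) : Prop :=
  h = h' ∨ sim h h' ∨ sim h' h

def PersistentInsanity {E : Type*} (H : Set (List E)) (sim : List E → List E → Prop) : Prop :=
  ∀ h h' : List E, h ∈ H → h' ∈ H → infoSet H sim h = ∅ → h <+: h' → infoSet H sim h' = ∅

/-!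
On a reflexive frame, the last entry of the experience of a history is its current information set.
So accessible histories with equal experiences have equal information sets, and `PRee` makes the
relation Euclidean. It also gives `PRhc`: if `h ++ [e] ∼ h'`, then the information set of `h` occurs
in the experience of `h ++ [e]`, hence among the information sets of the prefixes of `h'`.

Conversely, as sublists in both directions are equal, it suffices that `h ∼ h'` makes the experience
of `h` a sublist of that of `h'`. This goes by induction on `h`: history consistency sends
`h = g ++ [e]` to a prefix `k` of `h'` with `g ∼ k`. If `[g]∼ ≠ [h]∼`, then also `[k]∼ ≠ [h']∼`, so
after the experience of `k` that of `h'` still reaches the entry `[h']∼ = [h]∼`.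
-/

section Destutter

variable {α : Type*}

theorem destutter'_append_singleton (R : α → α → Prop) [DecidableRel R] (a : α) (l : List α)
    (b : α) :
    (l ++ [b]).destutter' R a =
      if ∀ c ∈ (l.destutter' R a).getLast?, R c b then l.destutter' R a ++ [b]
      else l.destutter' R a := by
  induction l generalizing a with
  | nil => simp [List.destutter'_singleton]
  | cons d l ih =>
    rw [List.cons_append]
    by_cases had : R a d
    · simp only [List.destutter'_cons_pos _ had, ih d,
        List.getLast?_cons_of_ne_nil (List.destutter'_ne_nil l R)]
      split_ifs <;> rfl
    · simp only [List.destutter'_cons_neg _ had, ih a]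

theorem destutter_append_singleton (R : α → α → Prop) [DecidableRel R] (l : List α) (b : α) :
    (l ++ [b]).destutter R =
      if ∀ a ∈ (l.destutter R).getLast?, R a b then l.destutter R ++ [b] else l.destutter R := by
  cases l with
  | nil => simp
  | cons a l => exact destutter'_append_singleton R a l b

theorem getLast?_destutter_ne [DecidableEq α] (l : List α) :
    (l.destutter (· ≠ ·)).getLast? = l.getLast? := by
  induction l using List.reverseRecOn with
  | nil => rfl
  | append_singleton l b ih =>
    rw [destutter_append_singleton, ih, List.getLast?_concat]
    split_ifs with hb
    · exact List.getLast?_concat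
    · push Not at hb
      obtain ⟨_, hlast, rfl⟩ := hb
      exact ih.trans hlast

end Destutter

section EpistemicExperience

variable {E : Type*} (H : Set (List E)) (sim : List E → List E → Prop)

theorem getLast?_EEd (h : List E) : (EEd H sim h).getLast? = some (infoSet H sim h) := by
  rw [EEd, getLast?_destutter_ne, List.range_succ, List.map_append, List.map_singleton,
    List.getLast?_concat, List.take_length]

theorem infoSet_mem_EEd (h : List E) : infoSet H sim h ∈ EEd H sim h :=
  List.mem_of_getLast? (getLast?_EEd H sim h)

theorem EEd_append_singleton (g : List E) (e : E) :
    EEd H sim (g ++ [e]) =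
      if infoSet H sim g = infoSet H sim (g ++ [e]) then EEd H sim g
      else EEd H sim g ++ [infoSet H sim (g ++ [e])] := by
  have hraw : (List.range ((g ++ [e]).length + 1)).map (fun n ↦ infoSet H sim ((g ++ [e]).take n)) =
      (List.range (g.length + 1)).map (fun n ↦ infoSet H sim (g.take n)) ++
        [infoSet H sim (g ++ [e])] := by
    rw [List.range_succ, List.map_append, List.map_singleton, List.take_length,
      List.length_append, List.length_singleton]
    congr 1
    refine List.map_congr_left fun n hn ↦ ?_
    rw [List.take_append_of_le_length (Nat.le_of_lt_succ (List.mem_range.mp hn))]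
  rw [EEd, hraw, destutter_append_singleton, ← EEd, getLast?_EEd]
  simp only [Option.mem_some_iff, forall_eq', ne_eq, ite_not]

variable {H sim}

theorem exists_prefix_of_mem_EEd {h : List E} {s : Set (List E)} (hs : s ∈ EEd H sim h) :
    ∃ g, g <+: h ∧ infoSet H sim g = s := by
  obtain ⟨n, -, rfl⟩ := List.mem_map.mp ((List.destutter_sublist _ _).subset hs)
  exact ⟨h.take n, List.take_prefix n h, rfl⟩

theorem EEd_prefix_EEd {g h : List E} (hgh : g <+: h) : EEd H sim g <+: EEd H sim h := by
  obtain ⟨t, rfl⟩ := hgh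
  induction t using List.reverseRecOn with
  | nil => rw [List.append_nil]
  | append_singleton t e ih =>
    rw [← List.append_assoc, EEd_append_singleton]
    split_ifs
    · exact ih
    · exact ih.trans (List.prefix_append _ _)

theorem EEd_append_infoSet_sublist {k h : List E} (hkh : k <+: h)
    (hne : infoSet H sim k ≠ infoSet H sim h) :
    (EEd H sim k ++ [infoSet H sim h]).Sublist (EEd H sim h) := by
  obtain ⟨t, ht⟩ := EEd_prefix_EEd (H := H) (sim := sim) hkh
  have hlast : t.getLast?.or (some (infoSet H sim k)) = some (infoSet H sim h) := by
    rw [← getLast?_EEd, ← getLast?_EEd, ← ht, List.getLast?_append]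
  have hmem : infoSet H sim h ∈ t := List.mem_of_getLast? <|
    (Option.or_eq_some_iff.mp hlast).resolve_right fun hk ↦ hne (Option.some.inj hk.2)
  rw [← ht]
  exact (List.singleton_sublist.mpr hmem).append_left _

theorem PRee.infoSet_eq (hee : PRee H sim) {g h : List E} (hg : g ∈ H) (hh : h ∈ H)
    (hgh : sim g h) : infoSet H sim g = infoSet H sim h := by
  rw [← Option.some_inj, ← getLast?_EEd, ← getLast?_EEd, hee g h hg hh hgh]

theorem PRee.euclOn (hee : PRee H sim) : EuclOn H sim := by
  intro a b c ha hb hc hab hac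
  have hmem : c ∈ infoSet H sim a := ⟨hc, hac⟩
  rw [hee.infoSet_eq ha hb hab] at hmem
  exact hmem.2

theorem PRee.prhc (hH : PrefixClosed H) (hrefl : ∀ h ∈ H, sim h h) (hee : PRee H sim) :
    PRhc H sim := by
  intro h h' e _ hhe hh' hsim
  have hmem : infoSet H sim h ∈ EEd H sim h' := by
    rw [← hee _ _ hhe hh' hsim]
    exact (EEd_prefix_EEd (List.prefix_append h [e])).subset (infoSet_mem_EEd H sim h)
  obtain ⟨k, hkh', hk⟩ := exists_prefix_of_mem_EEd hmem
  have hkH : k ∈ H := hH k h' hkh' hh'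
  have hself : k ∈ infoSet H sim k := ⟨hkH, hrefl k hkH⟩
  rw [hk] at hself
  exact ⟨k, hkH, hself.2, hkh'⟩

theorem EuclOn.infoSet_eq (heucl : EuclOn H sim) (hrefl : ∀ h ∈ H, sim h h) {g h : List E}
    (hg : g ∈ H) (hh : h ∈ H) (hgh : sim g h) : infoSet H sim g = infoSet H sim h := by
  have hhg : sim h g := heucl g h g hg hh hg hgh (hrefl g hg)
  ext k
  exact ⟨fun ⟨hk, hgk⟩ ↦ ⟨hk, heucl g h k hg hh hk hgh hgk⟩,
    fun ⟨hk, hhk⟩ ↦ ⟨hk, heucl h g k hh hg hk hhg hhk⟩⟩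

theorem PRhc.EEd_sublist_EEd (hH : PrefixClosed H) (hrefl : ∀ h ∈ H, sim h h)
    (heucl : EuclOn H sim) (hhc : PRhc H sim) {h h' : List E} (hh : h ∈ H) (hh' : h' ∈ H)
    (hsim : sim h h') : (EEd H sim h).Sublist (EEd H sim h') := by
  have hinfo : infoSet H sim h = infoSet H sim h' := heucl.infoSet_eq hrefl hh hh' hsim
  induction h using List.reverseRecOn generalizing h' with
  | nil =>
    have hnil : EEd H sim [] = [infoSet H sim []] := rfl
    rw [hnil, List.singleton_sublist, hinfo]
    exact infoSet_mem_EEd H sim h'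
  | append_singleton g e ih =>
    have hg : g ∈ H := hH g _ (List.prefix_append g [e]) hh
    obtain ⟨k, hk, hgk, hkh'⟩ := hhc g h' e hg hh hh' hsim
    have hinfo_k : infoSet H sim g = infoSet H sim k := heucl.infoSet_eq hrefl hg hk hgk
    have hsub : (EEd H sim g).Sublist (EEd H sim k) := ih hg hk hgk hinfo_k
    rw [EEd_append_singleton, hinfo_k, hinfo]
    split_ifs with hstutter
    · exact hsub.trans (EEd_prefix_EEd hkh').sublist
    · exact (hsub.append_right _).trans (EEd_append_infoSet_sublist hkh' hstutter)

theorem PRhc.pree (hH : PrefixClosed H) (hrefl : ∀ h ∈ H, sim h h) (heucl : EuclOn H sim)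
    (hhc : PRhc H sim) : PRee H sim := by
  intro h h' hh hh' hsim
  have hsymm : sim h' h := heucl h h' h hh hh' hh hsim (hrefl h hh)
  exact (hhc.EEd_sublist_EEd hH hrefl heucl hh hh' hsim).antisymm
    (hhc.EEd_sublist_EEd hH hrefl heucl hh' hh hsymm)

theorem S5on.euclOn (hS5 : S5on H sim) : EuclOn H sim :=
  fun a b c _ _ _ hab hac ↦ hS5.2.2 b a c (hS5.2.1 a b hab) hac

end EpistemicExperience

theorem s5_pree_iff_prhc_general {E : Type*} (H : Set (List E))
    (sim : List E → List E → Prop) (hH : PrefixClosed H) (hrefl : ∀ h ∈ H, sim h h) :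
    PRee H sim ↔ EuclOn H sim ∧ PRhc H sim :=
  ⟨fun hee ↦ ⟨hee.euclOn, hee.prhc hH hrefl⟩, fun ⟨heucl, hhc⟩ ↦ hhc.pree hH hrefl heucl⟩

/-- On S5 ETL frames, PR_ee and PR_hc are equivalent. -/
theorem s5_pree_iff_prhc {E : Type*} [Fintype E] (H : Set (List E))
    (sim : List E → List E → Prop) (hH : PrefixClosed H) (hS5 : S5on H sim) :
    PRee H sim ↔ PRhc H sim :=
  (s5_pree_iff_prhc_general H sim hH hS5.1).trans (and_iff_right hS5.euclOn)
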